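/- Let γ_d denote the standard Gaussian measure on ℝ^d and let ν be a probability measure on ℝ^d with D_KL(ν‖γ_d) < ∞. Then there exists a coupling π of γ_d and ν such that the straight-line interpolation paths x_t(x,y) = (1−t)x + t·y, which satisfy d/dt x_t(x,y) = y − x for all t ∈ [0,1], have time-integrated expected squared velocity bounded by the KL divergence: ∫₀¹ ( ∫ ‖y − x‖² dπ(x,y) ) dt = ∫ ‖y − x‖² dπ(x,y) ≤ 2·D_KL(ν‖γ_d). (Lemma 4.4 of the paper: the transporting velocity field has expected squared norm at most 2·D_KL(ν‖γ_d).) -/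

import Mathlib

open MeasureTheory ENNReal
open scoped Classical

noncomputable section

/-- A coupling of `μ` and `ν`: a probability measure on the product whose
first marginal is `μ` and whose second marginal is `ν`. -/
def IsCoupling {d : ℕ}
    (π : Measure (EuclideanSpace ℝ (Fin d) × EuclideanSpace ℝ (Fin d)))
    (μ ν : Measure (EuclideanSpace ℝ (Fin d))) : Prop :=
  IsProbabilityMeasure π ∧ π.map Prod.fst = μ ∧ π.map Prod.snd = ν

/-- The Kullback–Leibler divergence `D_KL(ν‖μ) = ∫ log(dν/dμ) dν` when `ν ≪ μ`
(and this integral makes sense), and `+∞` otherwise. -/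
def klDiv {α : Type*} [MeasurableSpace α] (ν μ : Measure α) : ℝ≥0∞ :=
  if ν ≪ μ ∧ Integrable (llr ν μ) ν then ENNReal.ofReal (∫ x, llr ν μ x ∂ν) else ∞

/-- The standard Gaussian measure on `ℝ^d`, with density
`(2π)^(−d/2) exp(−‖x‖²/2)` with respect to Lebesgue measure. -/
def stdGaussian (d : ℕ) : Measure (EuclideanSpace ℝ (Fin d)) :=
  volume.withDensity fun x =>
    ENNReal.ofReal ((2 * Real.pi) ^ (-(d : ℝ) / 2) * Real.exp (-‖x‖ ^ 2 / 2))

/-!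
The coupling is the graph of the Knothe–Rosenblatt map, which transports the coordinates one after
the other, each by the monotone rearrangement of the standard Gaussian onto the conditional law of
the target.

In dimension one, let `T` be the monotone map from `γ` to `ν`, and `φ` the Gaussian density. Almost
everywhere `T' · (dν/dγ ∘ T) · (φ ∘ T) = φ`, so that
`log (dν/dγ ∘ T) = (T² - x²) / 2 - log T'`. Together with `log T' ≤ T' - 1` and the Gaussian
integration by parts `∫ T' dγ ≤ ∫ x T dγ` this gives
`∫ (T - x)² dγ ≤ 2 ∫ log (dν/dγ ∘ T) dγ = 2 D(ν ‖ γ)`. Since `T` is merely monotone, the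
integration by parts is done by writing `φ x = ∫_{s > |x|} s φ s ds` and swapping the integrals,
after which only `∫_{-s}^{s} T' ≤ T s - T (-s)` is needed. The general case follows by adding up the
one-dimensional inequalities for the conditional laws with the chain rule for relative entropy.
-/

section

open ProbabilityTheory hiding stdGaussian
open scoped NNReal
open Set Filter Topology

variable {α : Type*} [MeasurableSpace α]

section MonotoneTransport

lemma strictMono_cdf (μ : Measure ℝ) [IsProbabilityMeasure μ] [μ.IsOpenPosMeasure] :
    StrictMono (cdf μ) := by
  intro a b hab
  have hIoc : μ (Ioc a b) = ENNReal.ofReal (cdf μ b - cdf μ a) := by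
    conv_lhs => rw [← measure_cdf μ]
    exact StieltjesFunction.measure_Ioc _ _ _
  have hpos : 0 < μ (Ioc a b) :=
    (isOpen_Ioo.measure_pos μ (nonempty_Ioo.2 hab)).trans_le (measure_mono Ioo_subset_Ioc_self)
  rw [hIoc, ENNReal.ofReal_pos] at hpos
  exact sub_pos.1 hpos

lemma continuous_cdf (μ : Measure ℝ) [IsProbabilityMeasure μ] [NullSingletonClass μ] :
    Continuous (cdf μ) := by
  refine continuous_iff_continuousAt.2 fun x => ?_
  rw [(monotone_cdf μ).continuousAt_iff_leftLim_eq_rightLim, StieltjesFunction.rightLim_eq]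
  refine le_antisymm ((monotone_cdf μ).leftLim_le le_rfl) (sub_nonpos.1 ?_)
  rw [← ENNReal.ofReal_eq_zero, ← StieltjesFunction.measure_singleton, measure_cdf,
    measure_singleton]

lemma cdf_pos (μ : Measure ℝ) [IsProbabilityMeasure μ] [μ.IsOpenPosMeasure] (x : ℝ) :
    0 < cdf μ x :=
  (cdf_nonneg μ (x - 1)).trans_lt (strictMono_cdf μ (sub_one_lt x))

lemma cdf_lt_one (μ : Measure ℝ) [IsProbabilityMeasure μ] [μ.IsOpenPosMeasure] (x : ℝ) :
    cdf μ x < 1 :=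
  (strictMono_cdf μ (lt_add_one x)).trans_le (cdf_le_one μ (x + 1))

lemma measure_setOf_cdf_le (μ : Measure ℝ) [IsProbabilityMeasure μ] [μ.IsOpenPosMeasure]
    [NullSingletonClass μ] {u : ℝ} (h0 : 0 ≤ u) (h1 : u ≤ 1) :
    μ {x | cdf μ x ≤ u} = ENNReal.ofReal u := by
  rcases h0.eq_or_lt with rfl | h0
  · simp [(cdf_pos μ _).not_ge]
  rcases h1.eq_or_lt with rfl | h1
  · simp [cdf_le_one]
  obtain ⟨a, rfl⟩ : ∃ a, cdf μ a = u :=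
    mem_range_of_exists_le_of_exists_ge (continuous_cdf μ)
      ((tendsto_cdf_atBot μ).eventually_le_const h0).exists
      ((tendsto_cdf_atTop μ).eventually_const_le h1).exists
  simp_rw [(strictMono_cdf μ).le_iff_le]
  exact (ofReal_cdf μ a).symm

/-- The monotone rearrangement `G⁻¹ ∘ F` of `μ` into `ν`, where `F` and `G` are their distribution
functions and `G⁻¹` is the quantile function of `ν`. When `F` takes a value outside `(0, 1)` the
infimum may be that of an empty or unbounded set, with the value `0`. -/
def monotoneTransport (μ ν : Measure ℝ) (x : ℝ) : ℝ :=
  sInf {t | cdf μ x ≤ cdf ν t}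

variable (μ ν : Measure ℝ) [IsProbabilityMeasure μ] [μ.IsOpenPosMeasure]

lemma monotoneTransport_le_iff (x t : ℝ) :
    monotoneTransport μ ν x ≤ t ↔ cdf μ x ≤ cdf ν t := by
  have hbdd : BddBelow {s | cdf μ x ≤ cdf ν s} := by
    obtain ⟨a, ha⟩ := ((tendsto_cdf_atBot ν).eventually_lt_const (cdf_pos μ x)).exists
    exact ⟨a, fun s hs => ((monotone_cdf ν).reflect_lt (ha.trans_le hs)).le⟩
  have hne : {s | cdf μ x ≤ cdf ν s}.Nonempty :=
    ((tendsto_cdf_atTop ν).eventually_const_le (cdf_lt_one μ x)).exists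
  refine ⟨fun h => ?_, fun h => csInf_le hbdd h⟩
  have hright : ∀ s ∈ Ioi t, cdf μ x ≤ cdf ν s := fun s hs => by
    obtain ⟨r, hr, hrs⟩ := exists_lt_of_csInf_lt hne (h.trans_lt hs)
    exact hr.trans (monotone_cdf ν hrs.le)
  have hcont : Tendsto (cdf ν) (𝓝[>] t) (𝓝 (cdf ν t)) :=
    ((cdf ν).right_continuous t).mono Ioi_subset_Ici_self
  exact ge_of_tendsto hcont (eventually_nhdsWithin_of_forall hright)

lemma cdf_le_cdf_monotoneTransport (x : ℝ) : cdf μ x ≤ cdf ν (monotoneTransport μ ν x) :=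
  (monotoneTransport_le_iff μ ν x _).1 le_rfl

lemma monotone_monotoneTransport : Monotone (monotoneTransport μ ν) := fun x y hxy =>
  (monotoneTransport_le_iff μ ν x _).2
    ((monotone_cdf μ hxy).trans (cdf_le_cdf_monotoneTransport μ ν y))

lemma cdf_monotoneTransport [IsProbabilityMeasure ν] [NullSingletonClass ν] (x : ℝ) :
    cdf ν (monotoneTransport μ ν x) = cdf μ x := by
  refine le_antisymm ?_ (cdf_le_cdf_monotoneTransport μ ν x)
  refine le_of_tendsto ((continuous_cdf ν).continuousWithinAt (s := Iio (monotoneTransport μ ν x)))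
    (eventually_nhdsWithin_of_forall fun t ht => le_of_not_ge fun hle => ?_)
  exact ht.not_ge ((monotoneTransport_le_iff μ ν x t).2 hle)

lemma map_monotoneTransport [NullSingletonClass μ] [IsProbabilityMeasure ν] :
    μ.map (monotoneTransport μ ν) = ν := by
  have hmeas : Measurable (monotoneTransport μ ν) := (monotone_monotoneTransport μ ν).measurable
  have := Measure.isProbabilityMeasure_map (μ := μ) hmeas.aemeasurable
  refine Measure.ext_of_Iic _ _ fun t => ?_
  rw [Measure.map_apply hmeas measurableSet_Iic, ← ofReal_cdf ν,
    ← measure_setOf_cdf_le μ (cdf_nonneg ν t) (cdf_le_one ν t)]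
  simp_rw [preimage, mem_Iic, monotoneTransport_le_iff]

lemma measurable_monotoneTransport_kernel (κ : Kernel α ℝ) [IsMarkovKernel κ] :
    Measurable fun p : α × ℝ => monotoneTransport μ (κ p.1) p.2 := by
  refine measurable_of_Iic fun t => ?_
  simp_rw [preimage, mem_Iic, monotoneTransport_le_iff, cdf_eq_real (κ _), measureReal_def]
  exact measurableSet_le ((monotone_cdf μ).measurable.comp measurable_snd)
    ((κ.measurable_coe measurableSet_Iic).comp measurable_fst).ennreal_toReal

end MonotoneTransport

section MongeAmpere

lemma ae_hasDerivAt_cdf (μ : Measure ℝ) [IsProbabilityMeasure μ] :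
    ∀ᵐ x, HasDerivAt (cdf μ) (μ.rnDeriv volume x).toReal x := by
  simpa only [measure_cdf] using (cdf μ).ae_hasDerivAt

lemma nullSingletonClass_of_absolutelyContinuous {μ ν : Measure α} [NullSingletonClass ν]
    (h : μ ≪ ν) : NullSingletonClass μ :=
  ⟨fun x => h (measure_singleton x)⟩

theorem ae_rnDeriv_monotoneTransport_mul_deriv {μ ν : Measure ℝ} [IsProbabilityMeasure μ]
    [μ.IsOpenPosMeasure] [IsProbabilityMeasure ν] (hμ : μ ≪ volume) (hν : ν ≪ volume) :
    ∀ᵐ x ∂μ, (ν.rnDeriv volume (monotoneTransport μ ν x)).toReal *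
      deriv (monotoneTransport μ ν) x = (μ.rnDeriv volume x).toReal := by
  have := nullSingletonClass_of_absolutelyContinuous hμ
  have := nullSingletonClass_of_absolutelyContinuous hν
  have hmono := monotone_monotoneTransport μ ν
  have hcdfν : ∀ᵐ y ∂μ.map (monotoneTransport μ ν),
      HasDerivAt (cdf ν) (ν.rnDeriv volume y).toReal y := by
    rw [map_monotoneTransport]
    exact hν (ae_hasDerivAt_cdf ν)
  filter_upwards [ae_of_ae_map hmono.measurable.aemeasurable hcdfν, hμ (ae_hasDerivAt_cdf μ),
    hμ hmono.ae_differentiableAt] with x hν hμ hT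
  have hcomp := hν.comp x hT.hasDerivAt
  rw [funext (cdf_monotoneTransport μ ν) (f := cdf ν ∘ _)] at hcomp
  exact hcomp.unique hμ

end MongeAmpere

section GaussianIntegrationByParts

instance isOpenPosMeasure_gaussianReal (m : ℝ) (v : ℝ≥0) [NeZero v] :
    (gaussianReal m v).IsOpenPosMeasure :=
  (gaussianReal_absolutelyContinuous' m (NeZero.ne v)).isOpenPosMeasure

instance (m : ℝ) (v : ℝ≥0) [NeZero v] : NullSingletonClass (gaussianReal m v) :=
  nullSingletonClass_gaussianReal (NeZero.ne v)

lemma hasDerivAt_gaussianPDFReal (m : ℝ) (v : ℝ≥0) (x : ℝ) :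
    HasDerivAt (gaussianPDFReal m v) (-((x - m) / v * gaussianPDFReal m v x)) x := by
  have hexp : HasDerivAt (fun y => -(y - m) ^ 2 / (2 * v)) (-((x - m) / v)) x := by
    convert! (((hasDerivAt_id' x).sub_const m).fun_pow 2).fun_neg.div_const (2 * (v : ℝ)) using 1
    push_cast
    ring
  rw [gaussianPDFReal_def]
  convert! hexp.exp.const_mul (√(2 * Real.pi * v))⁻¹ using 1
  ring

lemma gaussianPDFReal_zero_neg (v : ℝ≥0) (x : ℝ) :
    gaussianPDFReal 0 v (-x) = gaussianPDFReal 0 v x := by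
  simp [gaussianPDFReal]

lemma tendsto_gaussianPDFReal_atTop (m : ℝ) {v : ℝ≥0} (hv : v ≠ 0) :
    Tendsto (gaussianPDFReal m v) atTop (𝓝 0) := by
  have hsq : Tendsto (fun x : ℝ => (x - m) ^ 2) atTop atTop :=
    (tendsto_pow_atTop two_ne_zero).comp (tendsto_atTop_add_const_right _ _ tendsto_id)
  have hexp := Real.tendsto_exp_neg_atTop_nhds_zero.comp
    (hsq.atTop_div_const (r := 2 * (v : ℝ)) (by positivity))
  simpa only [gaussianPDFReal_def, Function.comp_def, neg_div, mul_zero] using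
    hexp.const_mul (√(2 * Real.pi * v))⁻¹

lemma lintegral_Ioi_mul_gaussianPDF {a : ℝ} (ha : 0 ≤ a) :
    ∫⁻ s in Ioi a, ENNReal.ofReal (s * gaussianPDFReal 0 1 s) = gaussianPDF 0 1 a := by
  have hderiv : ∀ s ∈ Ici a, HasDerivAt (fun s => -gaussianPDFReal 0 1 s)
      (s * gaussianPDFReal 0 1 s) s := fun s _ => by
    simpa using (hasDerivAt_gaussianPDFReal 0 1 s).fun_neg
  have hnonneg : ∀ s ∈ Ioi a, 0 ≤ s * gaussianPDFReal 0 1 s := fun s hs =>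
    mul_nonneg (ha.trans hs.le) (gaussianPDFReal_nonneg 0 1 s)
  have hlim := (tendsto_gaussianPDFReal_atTop 0 one_ne_zero).neg
  rw [← ofReal_integral_eq_lintegral_ofReal (integrableOn_Ioi_deriv_of_nonneg' hderiv hnonneg hlim)
      ((ae_restrict_iff' measurableSet_Ioi).2 (ae_of_all _ hnonneg)),
    integral_Ioi_of_hasDerivAt_of_nonneg' hderiv hnonneg hlim, gaussianPDF]
  simp

lemma lintegral_lintegral_Ioi_abs {F : ℝ → ℝ → ℝ≥0∞} (hF : Measurable (Function.uncurry F)) :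
    ∫⁻ x, ∫⁻ s in Ioi |x|, F x s = ∫⁻ s in Ioi 0, ∫⁻ x in Ioo (-s) s, F x s := by
  have hcone : MeasurableSet {p : ℝ × ℝ | |p.1| < p.2} := by measurability
  have hswap := lintegral_lintegral_swap (μ := volume) (ν := volume)
    (f := fun x s => (Ioi |x|).indicator (F x) s) (hF.indicator hcone).aemeasurable
  simp_rw [← lintegral_indicator measurableSet_Ioi, hswap, ← lintegral_indicator measurableSet_Ioo]
  refine lintegral_congr fun s => ?_
  by_cases hs : s ∈ Ioi 0
  · rw [indicator_of_mem hs]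
    simp only [indicator, mem_Ioi, mem_Ioo, abs_lt]
  · rw [indicator_of_notMem hs]
    refine lintegral_eq_zero_of_ae_eq_zero (ae_of_all _ fun x => indicator_of_notMem ?_ _)
    exact fun hx => hs ((abs_nonneg x).trans_lt hx)

lemma lintegral_gaussianReal_eq_lintegral_Ioo {g : ℝ → ℝ≥0∞} (hg : Measurable g) :
    ∫⁻ x, g x ∂gaussianReal 0 1 =
      ∫⁻ s in Ioi 0, ENNReal.ofReal (s * gaussianPDFReal 0 1 s) * ∫⁻ x in Ioo (-s) s, g x := by
  calc ∫⁻ x, g x ∂gaussianReal 0 1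
    _ = ∫⁻ x, gaussianPDF 0 1 |x| * g x := by
        rw [gaussianReal_of_var_ne_zero 0 one_ne_zero,
          lintegral_withDensity_eq_lintegral_mul _ (measurable_gaussianPDF 0 1) hg]
        simp [gaussianPDF, gaussianPDFReal]
    _ = ∫⁻ x, ∫⁻ s in Ioi |x|, ENNReal.ofReal (s * gaussianPDFReal 0 1 s) * g x := by
        refine lintegral_congr fun x => ?_
        rw [lintegral_mul_const _ (by fun_prop), lintegral_Ioi_mul_gaussianPDF (abs_nonneg x)]
    _ = ∫⁻ s in Ioi 0, ∫⁻ x in Ioo (-s) s, ENNReal.ofReal (s * gaussianPDFReal 0 1 s) * g x :=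
        lintegral_lintegral_Ioi_abs (by fun_prop)
    _ = _ := by simp_rw [lintegral_const_mul _ hg]

lemma integrable_gaussianReal_iff {E : Type*} [NormedAddCommGroup E] [NormedSpace ℝ E] {m : ℝ}
    {v : ℝ≥0} (hv : v ≠ 0) {f : ℝ → E} :
    Integrable f (gaussianReal m v) ↔ Integrable fun x => gaussianPDFReal m v x • f x := by
  rw [gaussianReal_of_var_ne_zero m hv, integrable_withDensity_iff_integrable_smul'
    (measurable_gaussianPDF m v) (ae_of_all _ fun _ => gaussianPDF_lt_top)]
  simp_rw [toReal_gaussianPDF]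

lemma mul_gaussianPDFReal_mul_sub (f : ℝ → ℝ) (s : ℝ) :
    s * gaussianPDFReal 0 1 s * (f s - f (-s)) =
      gaussianPDFReal 0 1 (-s) • (-s * f (-s)) + gaussianPDFReal 0 1 s • (s * f s) := by
  simp only [gaussianPDFReal_zero_neg, smul_eq_mul]
  ring

lemma integrable_mul_gaussianPDFReal_mul_sub {f : ℝ → ℝ}
    (hf : Integrable (fun x => x * f x) (gaussianReal 0 1)) :
    Integrable fun s => s * gaussianPDFReal 0 1 s * (f s - f (-s)) := by
  rw [integrable_gaussianReal_iff one_ne_zero] at hf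
  simp_rw [mul_gaussianPDFReal_mul_sub]
  exact hf.comp_neg.add hf

lemma integral_mul_gaussianReal_eq_integral_Ioi {f : ℝ → ℝ}
    (hf : Integrable (fun x => x * f x) (gaussianReal 0 1)) :
    ∫ x, x * f x ∂gaussianReal 0 1 =
      ∫ s in Ioi 0, s * gaussianPDFReal 0 1 s * (f s - f (-s)) := by
  rw [integrable_gaussianReal_iff one_ne_zero] at hf
  simp_rw [mul_gaussianPDFReal_mul_sub]
  rw [integral_gaussianReal_eq_integral_smul one_ne_zero,
    ← intervalIntegral.integral_Iic_add_Ioi hf.integrableOn hf.integrableOn,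
    integral_add hf.comp_neg.integrableOn hf.integrableOn, ← neg_zero, ← integral_comp_neg_Ioi,
    neg_zero]

lemma lintegral_Ioo_deriv_le {f : ℝ → ℝ} (hf : Monotone f) {a b : ℝ} (hab : a ≤ b) :
    ∫⁻ x in Ioo a b, ENNReal.ofReal (deriv f x) ≤ ENNReal.ofReal (f b - f a) := by
  have hmono := hf.monotoneOn (uIcc a b)
  have hint := hmono.intervalIntegral_deriv_mem_uIcc
  rw [uIcc_of_le (sub_nonneg.2 (hf hab))] at hint
  rw [Measure.restrict_congr_set Ioo_ae_eq_Ioc, ← ofReal_integral_eq_lintegral_ofReal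
    ((intervalIntegrable_iff_integrableOn_Ioc_of_le hab).1 hmono.intervalIntegrable_deriv)
    (ae_of_all _ fun _ => hf.deriv_nonneg), ← intervalIntegral.integral_of_le hab]
  exact ENNReal.ofReal_le_ofReal hint.2

lemma mul_gaussianPDFReal_mul_sub_nonneg {f : ℝ → ℝ} (hf : Monotone f) {s : ℝ} (hs : 0 ≤ s) :
    0 ≤ s * gaussianPDFReal 0 1 s * (f s - f (-s)) :=
  mul_nonneg (mul_nonneg hs (gaussianPDFReal_nonneg 0 1 s))
    (sub_nonneg.2 (hf (neg_le_self hs)))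

lemma integral_mul_gaussianReal_nonneg {f : ℝ → ℝ} (hf : Monotone f)
    (hint : Integrable (fun x => x * f x) (gaussianReal 0 1)) :
    0 ≤ ∫ x, x * f x ∂gaussianReal 0 1 := by
  rw [integral_mul_gaussianReal_eq_integral_Ioi hint]
  exact setIntegral_nonneg measurableSet_Ioi fun s hs =>
    mul_gaussianPDFReal_mul_sub_nonneg hf (le_of_lt hs)

lemma lintegral_deriv_gaussianReal_le {f : ℝ → ℝ} (hf : Monotone f)
    (hint : Integrable (fun x => x * f x) (gaussianReal 0 1)) :
    ∫⁻ x, ENNReal.ofReal (deriv f x) ∂gaussianReal 0 1 ≤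
      ENNReal.ofReal (∫ x, x * f x ∂gaussianReal 0 1) := by
  calc ∫⁻ x, ENNReal.ofReal (deriv f x) ∂gaussianReal 0 1
    _ = ∫⁻ s in Ioi 0, ENNReal.ofReal (s * gaussianPDFReal 0 1 s) *
          ∫⁻ x in Ioo (-s) s, ENNReal.ofReal (deriv f x) :=
        lintegral_gaussianReal_eq_lintegral_Ioo (measurable_deriv f).ennreal_ofReal
    _ ≤ ∫⁻ s in Ioi 0, ENNReal.ofReal (s * gaussianPDFReal 0 1 s * (f s - f (-s))) := by
        refine setLIntegral_mono' measurableSet_Ioi fun s (hs : 0 < s) => ?_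
        rw [ENNReal.ofReal_mul (mul_nonneg hs.le (gaussianPDFReal_nonneg 0 1 s))]
        gcongr
        exact lintegral_Ioo_deriv_le hf (neg_le_self hs.le)
    _ = ENNReal.ofReal (∫ x, x * f x ∂gaussianReal 0 1) := by
        rw [integral_mul_gaussianReal_eq_integral_Ioi hint, ofReal_integral_eq_lintegral_ofReal
          (integrable_mul_gaussianPDFReal_mul_sub hint).integrableOn]
        exact (ae_restrict_iff' measurableSet_Ioi).2
          (ae_of_all _ fun s hs => mul_gaussianPDFReal_mul_sub_nonneg hf (le_of_lt hs))

theorem integrable_deriv_gaussianReal {f : ℝ → ℝ} (hf : Monotone f)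
    (hint : Integrable (fun x => x * f x) (gaussianReal 0 1)) :
    Integrable (deriv f) (gaussianReal 0 1) := by
  rw [← lintegral_ofReal_ne_top_iff_integrable (measurable_deriv f).aestronglyMeasurable
    (ae_of_all _ fun _ => hf.deriv_nonneg)]
  exact ((lintegral_deriv_gaussianReal_le hf hint).trans_lt ENNReal.ofReal_lt_top).ne

/- Gaussian integration by parts is only an inequality here: the singular part of the distributional
derivative of `f` is discarded. -/
theorem integral_deriv_gaussianReal_le {f : ℝ → ℝ} (hf : Monotone f)
    (hint : Integrable (fun x => x * f x) (gaussianReal 0 1)) :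
    ∫ x, deriv f x ∂gaussianReal 0 1 ≤ ∫ x, x * f x ∂gaussianReal 0 1 := by
  rw [← ENNReal.ofReal_le_ofReal_iff (integral_mul_gaussianReal_nonneg hf hint),
    ofReal_integral_eq_lintegral_ofReal (integrable_deriv_gaussianReal hf hint)
      (ae_of_all _ fun _ => hf.deriv_nonneg)]
  exact lintegral_deriv_gaussianReal_le hf hint

end GaussianIntegrationByParts

section EntropyInequality

lemma mul_le_mul_log_sub_add_exp {r : ℝ} (hr : 0 ≤ r) (b : ℝ) :
    r * b ≤ r * Real.log r - r + Real.exp b := by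
  rcases hr.eq_or_lt with rfl | hr
  · simp [Real.exp_nonneg]
  have hexp := Real.add_one_le_exp (b - Real.log r)
  rw [Real.exp_sub, Real.exp_log hr, le_div_iff₀ hr] at hexp
  linarith

theorem integrable_of_integrable_llr_of_integrable_exp {μ ν : Measure α} [SigmaFinite μ]
    [IsFiniteMeasure ν] (hνμ : ν ≪ μ) (hllr : Integrable (llr ν μ) ν) {f : α → ℝ}
    (hfm : AEStronglyMeasurable f μ) (hf : ∀ x, 0 ≤ f x)
    (hexp : Integrable (fun x => Real.exp (f x)) μ) : Integrable f ν := by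
  rw [← integrable_toReal_rnDeriv_mul_iff hνμ]
  have hlog := (integrable_rnDeriv_mul_log_iff hνμ).2 hllr
  refine ((hlog.sub (Measure.integrable_toReal_rnDeriv (μ := ν))).add hexp).mono'
    ((Measure.measurable_rnDeriv ν μ).ennreal_toReal.aestronglyMeasurable.mul hfm)
    (ae_of_all _ fun x => ?_)
  rw [Real.norm_of_nonneg (mul_nonneg ENNReal.toReal_nonneg (hf x))]
  exact mul_le_mul_log_sub_add_exp ENNReal.toReal_nonneg (f x)

theorem integrable_sq_norm_of_integrable_llr {E : Type*} [NormedAddCommGroup E] [NormedSpace ℝ E]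
    [MeasurableSpace E] [BorelSpace E] [SecondCountableTopology E] [CompleteSpace E]
    {μ ν : Measure E} [IsGaussian μ] [IsFiniteMeasure ν] (hνμ : ν ≪ μ)
    (hllr : Integrable (llr ν μ) ν) : Integrable (fun x => ‖x‖ ^ 2) ν := by
  obtain ⟨C, hC, hexp⟩ := IsGaussian.exists_integrable_exp_sq μ
  have hint := integrable_of_integrable_llr_of_integrable_exp hνμ hllr (by fun_prop)
    (fun x => by positivity) hexp
  simpa only [inv_mul_cancel_left₀ hC.ne'] using hint.const_mul C⁻¹

end EntropyInequality

section TalagrandReal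

variable {ν : Measure ℝ} [IsProbabilityMeasure ν]

local notation "γ₁" => gaussianReal 0 1

lemma log_gaussianPDFReal (m : ℝ) {v : ℝ≥0} (hv : v ≠ 0) (x : ℝ) :
    Real.log (gaussianPDFReal m v x) =
      Real.log (√(2 * Real.pi * v))⁻¹ - (x - m) ^ 2 / (2 * v) := by
  rw [gaussianPDFReal, Real.log_mul (by positivity) (Real.exp_ne_zero _), Real.log_exp, neg_div,
    ← sub_eq_add_neg]

lemma ae_rnDeriv_volume_eq_mul_gaussianPDFReal (hν : ν ≪ γ₁) :
    ∀ᵐ y ∂ν, (ν.rnDeriv volume y).toReal =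
      (ν.rnDeriv γ₁ y).toReal * gaussianPDFReal 0 1 y := by
  have hvol : ν ≪ volume := hν.trans (gaussianReal_absolutelyContinuous 0 one_ne_zero)
  filter_upwards [hvol (Measure.rnDeriv_mul_rnDeriv (κ := volume) hν),
    hvol (rnDeriv_gaussianReal 0 1)] with y hmul hpdf
  rw [← hmul, Pi.mul_apply, ENNReal.toReal_mul, hpdf, toReal_gaussianPDF]

theorem ae_llr_monotoneTransport_gaussianReal (hν : ν ≪ γ₁) :
    ∀ᵐ x ∂γ₁, 0 < deriv (monotoneTransport γ₁ ν) x ∧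
      llr ν γ₁ (monotoneTransport γ₁ ν x) = (monotoneTransport γ₁ ν x ^ 2 - x ^ 2) / 2 -
        Real.log (deriv (monotoneTransport γ₁ ν) x) := by
  have hγ : γ₁ ≪ volume := gaussianReal_absolutelyContinuous 0 one_ne_zero
  have hmono := monotone_monotoneTransport γ₁ ν
  have htarget : ∀ᵐ y ∂Measure.map (monotoneTransport γ₁ ν) γ₁, (ν.rnDeriv volume y).toReal =
      (ν.rnDeriv γ₁ y).toReal * gaussianPDFReal 0 1 y := by
    rw [map_monotoneTransport]
    exact ae_rnDeriv_volume_eq_mul_gaussianPDFReal hν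
  filter_upwards [ae_rnDeriv_monotoneTransport_mul_deriv hγ (hν.trans hγ),
    ae_of_ae_map hmono.measurable.aemeasurable htarget, hγ (rnDeriv_gaussianReal 0 1)]
    with x hMA hy hpdf
  rw [hy, hpdf, toReal_gaussianPDF] at hMA
  have hφ := gaussianPDFReal_pos 0 1 x one_ne_zero
  have hne := hMA.symm ▸ hφ.ne'
  have hderiv : 0 < deriv (monotoneTransport γ₁ ν) x :=
    hmono.deriv_nonneg.lt_of_ne' (right_ne_zero_of_mul hne)
  refine ⟨hderiv, ?_⟩
  have hlog := congrArg Real.log hMA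
  rw [Real.log_mul (left_ne_zero_of_mul hne) (right_ne_zero_of_mul hne),
    Real.log_mul (left_ne_zero_of_mul (left_ne_zero_of_mul hne))
      (right_ne_zero_of_mul (left_ne_zero_of_mul hne)),
    log_gaussianPDFReal 0 one_ne_zero, log_gaussianPDFReal 0 one_ne_zero] at hlog
  simp only [sub_zero, NNReal.coe_one, mul_one] at hlog
  rw [llr]
  linarith

lemma ae_sq_monotoneTransport_sub_le (hν : ν ≪ γ₁) :
    ∀ᵐ x ∂γ₁, (monotoneTransport γ₁ ν x - x) ^ 2 ≤ 2 * (llr ν γ₁ (monotoneTransport γ₁ ν x) +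
      (deriv (monotoneTransport γ₁ ν) x - x * monotoneTransport γ₁ ν x) + (x ^ 2 - 1)) := by
  filter_upwards [ae_llr_monotoneTransport_gaussianReal hν] with x ⟨hderiv, hllr⟩
  linarith [Real.log_le_sub_one_of_pos hderiv]

lemma memLp_two_monotoneTransport_gaussianReal (hν : ν ≪ γ₁) (hllr : Integrable (llr ν γ₁) ν) :
    MemLp (monotoneTransport γ₁ ν) 2 γ₁ := by
  have hmeas := (monotone_monotoneTransport γ₁ ν).measurable
  have hid : MemLp id 2 (Measure.map (monotoneTransport γ₁ ν) γ₁) := by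
    rw [map_monotoneTransport, memLp_two_iff_integrable_sq_norm aestronglyMeasurable_id]
    exact integrable_sq_norm_of_integrable_llr hν hllr
  exact (memLp_map_measure_iff aestronglyMeasurable_id hmeas.aemeasurable).1 hid

lemma integral_sq_gaussianReal (v : ℝ≥0) : ∫ x, x ^ 2 ∂gaussianReal 0 v = v := by
  rw [← variance_fun_id_gaussianReal (μ := 0) (v := v),
    variance_of_integral_eq_zero (by fun_prop) integral_id_gaussianReal]

lemma integral_sq_monotoneTransport_sub_le (hν : ν ≪ γ₁) (hllr : Integrable (llr ν γ₁) ν) :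
    ∫ x, (monotoneTransport γ₁ ν x - x) ^ 2 ∂γ₁ ≤ 2 * ∫ y, llr ν γ₁ y ∂ν := by
  have hmono := monotone_monotoneTransport γ₁ ν
  have hmap := map_monotoneTransport γ₁ ν
  have hT : MemLp (monotoneTransport γ₁ ν) 2 γ₁ :=
    memLp_two_monotoneTransport_gaussianReal hν hllr
  have hid : MemLp (fun x : ℝ => x) 2 γ₁ := memLp_id_gaussianReal 2
  have hmul : Integrable (fun x => x * monotoneTransport γ₁ ν x) γ₁ := hid.integrable_mul hT
  have hderiv : Integrable (deriv (monotoneTransport γ₁ ν)) γ₁ :=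
    integrable_deriv_gaussianReal hmono hmul
  have hdiff : Integrable (fun x => deriv (monotoneTransport γ₁ ν) x -
      x * monotoneTransport γ₁ ν x) γ₁ := hderiv.sub hmul
  have hllrm : AEStronglyMeasurable (llr ν γ₁) (Measure.map (monotoneTransport γ₁ ν) γ₁) :=
    (stronglyMeasurable_llr ν γ₁).aestronglyMeasurable
  have hllrT : Integrable (fun x => llr ν γ₁ (monotoneTransport γ₁ ν x)) γ₁ :=
    (integrable_map_measure hllrm hmono.measurable.aemeasurable).1 (by rwa [hmap])
  have hsq : Integrable (fun x : ℝ => x ^ 2 - 1) γ₁ := hid.integrable_sq.sub (integrable_const 1)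
  calc ∫ x, (monotoneTransport γ₁ ν x - x) ^ 2 ∂γ₁
    _ ≤ ∫ x, 2 * (llr ν γ₁ (monotoneTransport γ₁ ν x) +
          (deriv (monotoneTransport γ₁ ν) x - x * monotoneTransport γ₁ ν x) + (x ^ 2 - 1)) ∂γ₁ :=
        integral_mono_ae (hT.sub hid).integrable_sq
          (((hllrT.add hdiff).add hsq).const_mul 2) (ae_sq_monotoneTransport_sub_le hν)
    _ = 2 * (∫ x, llr ν γ₁ (monotoneTransport γ₁ ν x) ∂γ₁ +
          (∫ x, deriv (monotoneTransport γ₁ ν) x ∂γ₁ -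
            ∫ x, x * monotoneTransport γ₁ ν x ∂γ₁)) := by
        rw [integral_const_mul, integral_add (hllrT.fun_add hdiff) hsq,
          integral_add hllrT hdiff, integral_sub hderiv hmul,
          integral_sub hid.integrable_sq (integrable_const 1), integral_sq_gaussianReal]
        simp
    _ ≤ 2 * ∫ x, llr ν γ₁ (monotoneTransport γ₁ ν x) ∂γ₁ := by
        linarith [integral_deriv_gaussianReal_le hmono hmul]
    _ = 2 * ∫ y, llr ν γ₁ y ∂ν := by
        rw [← integral_map hmono.measurable.aemeasurable hllrm, hmap]

theorem lintegral_sq_monotoneTransport_sub_le (ν : Measure ℝ) [IsProbabilityMeasure ν] :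
    ∫⁻ x, ENNReal.ofReal ((monotoneTransport γ₁ ν x - x) ^ 2) ∂γ₁ ≤
      2 * InformationTheory.klDiv ν γ₁ := by
  by_cases hkl : InformationTheory.klDiv ν γ₁ = ∞
  · simp [hkl]
  obtain ⟨hν, hllr⟩ := InformationTheory.klDiv_ne_top_iff.1 hkl
  have hsq : Integrable (fun x => (monotoneTransport γ₁ ν x - x) ^ 2) γ₁ :=
    ((memLp_two_monotoneTransport_gaussianReal hν hllr).sub
      (memLp_id_gaussianReal 2)).integrable_sq
  rw [InformationTheory.klDiv_of_ac_of_integrable hν hllr, ← ofReal_integral_eq_lintegral_ofReal hsq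
    (ae_of_all _ fun x => sq_nonneg _), ← ENNReal.ofReal_ofNat, ← ENNReal.ofReal_mul zero_le_two]
  simpa using ENNReal.ofReal_le_ofReal (integral_sq_monotoneTransport_sub_le hν hllr)

end TalagrandReal

section ChainRule

open InformationTheory

variable {β : Type*} [MeasurableSpace β]


variable [MeasurableSpace.CountableOrCountablyGenerated α β]

lemma compProd_eq_withDensity_rnDeriv (μ : Measure α) [SFinite μ] {κ η : Kernel α β}
    [IsFiniteKernel κ] [IsFiniteKernel η] (h : ∀ᵐ a ∂μ, κ a ≪ η a) :
    μ ⊗ₘ κ = (μ ⊗ₘ η).withDensity fun p => κ.rnDeriv η p.1 p.2 := by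
  rw [← Measure.compProd_withDensity (Kernel.measurable_rnDeriv κ η)]
  refine Measure.compProd_congr ?_
  filter_upwards [h] with a ha
  exact (Kernel.withDensity_rnDeriv_eq ha).symm

theorem lintegral_klDiv_eq_klDiv_compProd (μ : Measure α) [IsFiniteMeasure μ] (κ η : Kernel α β)
    [IsFiniteKernel κ] [IsFiniteKernel η] :
    ∫⁻ a, InformationTheory.klDiv (κ a) (η a) ∂μ =
      InformationTheory.klDiv (μ ⊗ₘ κ) (μ ⊗ₘ η) := by
  by_cases hac : ∀ᵐ a ∂μ, κ a ≪ η a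
  swap
  · rw [klDiv_of_not_ac (mt Measure.absolutelyContinuous_compProd_right_iff.1 hac)]
    have hs : MeasurableSet {a | ¬ κ a ≪ η a} :=
      (Kernel.measurableSet_absolutelyContinuous κ η).compl
    refine top_unique ?_
    calc ∞ = ∫⁻ _ in {a | ¬ κ a ≪ η a}, ∞ ∂μ := by
          rw [setLIntegral_const, ENNReal.top_mul (mt ae_iff.2 hac)]
      _ = ∫⁻ a in {a | ¬ κ a ≪ η a}, InformationTheory.klDiv (κ a) (η a) ∂μ :=
          setLIntegral_congr_fun hs fun a ha => (klDiv_of_not_ac ha).symm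
      _ ≤ ∫⁻ a, InformationTheory.klDiv (κ a) (η a) ∂μ := setLIntegral_le_lintegral _ _
  have hrn : (μ ⊗ₘ κ).rnDeriv (μ ⊗ₘ η) =ᵐ[μ ⊗ₘ η] fun p => κ.rnDeriv η p.1 p.2 := by
    rw [compProd_eq_withDensity_rnDeriv μ hac]
    exact Measure.rnDeriv_withDensity _ (Kernel.measurable_rnDeriv κ η)
  calc ∫⁻ a, InformationTheory.klDiv (κ a) (η a) ∂μ
    _ = ∫⁻ a, ∫⁻ b, ENNReal.ofReal (klFun (κ.rnDeriv η a b).toReal) ∂η a ∂μ := by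
        refine lintegral_congr_ae ?_
        filter_upwards [hac] with a ha
        rw [klDiv_eq_lintegral_klFun_of_ac ha]
        refine lintegral_congr_ae ?_
        filter_upwards [Kernel.rnDeriv_eq_rnDeriv_measure (κ := κ) (η := η) (a := a)] with b hb
        rw [hb]
    _ = ∫⁻ p, ENNReal.ofReal (klFun (κ.rnDeriv η p.1 p.2).toReal) ∂(μ ⊗ₘ η) := by
        rw [Measure.lintegral_compProd (by fun_prop)]
    _ = InformationTheory.klDiv (μ ⊗ₘ κ) (μ ⊗ₘ η) := by
        rw [klDiv_eq_lintegral_klFun_of_ac (Measure.absolutelyContinuous_compProd_right_iff.2 hac)]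
        refine lintegral_congr_ae ?_
        filter_upwards [hrn] with p hp
        rw [hp]

theorem klDiv_compProd_prod_eq_add (μ ν : Measure α) [IsFiniteMeasure μ] [IsFiniteMeasure ν]
    (κ : Kernel α β) [IsMarkovKernel κ] (ρ : Measure β) [IsProbabilityMeasure ρ] :
    InformationTheory.klDiv (μ ⊗ₘ κ) (ν.prod ρ) =
      InformationTheory.klDiv μ ν + ∫⁻ a, InformationTheory.klDiv (κ a) ρ ∂μ := by
  rw [← Measure.compProd_const, klDiv_compProd_eq_add, ← lintegral_klDiv_eq_klDiv_compProd]
  simp only [Kernel.const_apply]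

end ChainRule

section TriangularMap

variable {X X' Y Y' : Type*} [MeasurableSpace X] [MeasurableSpace X'] [MeasurableSpace Y]
  [MeasurableSpace Y'] {T : X → X'} {S : X' → Y → Y'}

/-- The triangular (Knothe–Rosenblatt) map `(x, y) ↦ (T x, S (T x) y)`: its second component
depends on the first coordinate through the image `T x`, so that it can transport to the
conditional law given the first coordinate of the target. -/
def triangularMap (T : X → X') (S : X' → Y → Y') (p : X × Y) : X' × Y' :=
  (T p.1, S (T p.1) p.2)

lemma measurable_triangularMap (hT : Measurable T) (hS : Measurable (Function.uncurry S)) :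
    Measurable (triangularMap T S) :=
  (hT.comp measurable_fst).prodMk (hS.comp ((hT.comp measurable_fst).prodMk measurable_snd))

lemma map_prod_triangularMap (hT : Measurable T) (hS : Measurable (Function.uncurry S))
    {μ : Measure X} [SFinite μ] {ρ : Measure Y} [SFinite ρ] {κ : Kernel X' Y'} [IsSFiniteKernel κ]
    (hκ : ∀ x, ρ.map (S x) = κ x) :
    (μ.prod ρ).map (triangularMap T S) = μ.map T ⊗ₘ κ := by
  ext s hs
  rw [Measure.map_apply (measurable_triangularMap hT hS) hs,
    Measure.prod_apply (measurable_triangularMap hT hS hs), Measure.compProd_apply hs,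
    lintegral_map (Kernel.measurable_kernel_prodMk_left hs) hT]
  refine lintegral_congr fun x => ?_
  rw [← hκ, Measure.map_apply hS.of_uncurry_left (measurable_prodMk_left hs)]
  rfl

lemma lintegral_add_triangularMap (hT : Measurable T) (hS : Measurable (Function.uncurry S))
    (μ : Measure X) (ρ : Measure Y) [IsProbabilityMeasure ρ] {c : X → X' → ℝ≥0∞}
    {c' : Y → Y' → ℝ≥0∞} (hc : Measurable (Function.uncurry c))
    (hc' : Measurable (Function.uncurry c')) :
    ∫⁻ p, c p.1 (triangularMap T S p).1 + c' p.2 (triangularMap T S p).2 ∂μ.prod ρ =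
      ∫⁻ x, c x (T x) ∂μ + ∫⁻ x, ∫⁻ y, c' y (S x y) ∂ρ ∂μ.map T := by
  have hcT : Measurable fun x => c x (T x) := hc.comp (measurable_id.prodMk hT)
  have hcS : Measurable fun p : X' × Y => c' p.2 (S p.1 p.2) := hc'.comp (measurable_snd.prodMk hS)
  have hcST : Measurable fun p : X × Y => c' p.2 (S (T p.1) p.2) :=
    hcS.comp ((hT.comp measurable_fst).prodMk measurable_snd)
  simp only [triangularMap]
  rw [lintegral_add_right _ hcST, lintegral_prod _ hcST.aemeasurable,
    lintegral_prod (fun p : X × Y => c p.1 (T p.1)) (hcT.comp measurable_fst).aemeasurable,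
    lintegral_map hcS.lintegral_prod_right' hT]
  simp

end TriangularMap

section Tensorization

universe u

variable {X Y : Type u} [MeasurableSpace X] [MeasurableSpace Y]

/-- The transport-entropy inequality for a reference measure `γ`, a cost `c` and a constant `K`:
every probability measure `ν` is the image of `γ` under a map of transport cost at most `K` times
the relative entropy of `ν`. The map is required to depend measurably on `ν` when `ν` varies in a
kernel, which is what makes the inequality tensorize. -/
def TransportEntropyInequality (γ : Measure X) (c : X → X → ℝ≥0∞) (K : ℝ≥0) : Prop :=
  ∀ ⦃A : Type u⦄ [MeasurableSpace A] (κ : Kernel A X) [IsMarkovKernel κ],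
    ∃ T : A → X → X, Measurable (Function.uncurry T) ∧
      ∀ a, γ.map (T a) = κ a ∧
        ∫⁻ x, c x (T a x) ∂γ ≤ K * InformationTheory.klDiv (κ a) γ

lemma isProbabilityMeasure_eq_of_subsingleton [Subsingleton α] (μ ν : Measure α)
    [IsProbabilityMeasure μ] [IsProbabilityMeasure ν] : μ = ν := by
  refine Measure.ext fun s _ => ?_
  rcases s.eq_empty_or_nonempty with rfl | hs
  · simp
  · simp [Subsingleton.eq_univ_of_nonempty hs]

theorem transportEntropyInequality_gaussianReal :
    TransportEntropyInequality (gaussianReal 0 1) (fun x y => ENNReal.ofReal ((y - x) ^ 2)) 2 :=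
  fun _ _ κ _ => ⟨fun a => monotoneTransport (gaussianReal 0 1) (κ a),
    measurable_monotoneTransport_kernel (gaussianReal 0 1) κ, fun a =>
      ⟨map_monotoneTransport _ _, lintegral_sq_monotoneTransport_sub_le (κ a)⟩⟩

namespace TransportEntropyInequality

variable {γ : Measure X} {c : X → X → ℝ≥0∞} {K : ℝ≥0}

lemma exists_map (h : TransportEntropyInequality γ c K) (ν : Measure X)
    [IsProbabilityMeasure ν] :
    ∃ T : X → X, Measurable T ∧ γ.map T = ν ∧
      ∫⁻ x, c x (T x) ∂γ ≤ K * InformationTheory.klDiv ν γ := by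
  obtain ⟨T, hT, hν⟩ := h (Kernel.const PUnit ν)
  exact ⟨T .unit, hT.of_uncurry_left, hν .unit⟩

lemma map_equiv [IsFiniteMeasure γ] (h : TransportEntropyInequality γ c K) (e : X ≃ᵐ Y) :
    TransportEntropyInequality (γ.map e) (fun x y => c (e.symm x) (e.symm y)) K := by
  intro A _ κ _
  have := Kernel.IsMarkovKernel.map κ e.symm.measurable
  obtain ⟨T, hT, hκ⟩ := h (κ.map e.symm)
  refine ⟨fun a y => e (T a (e.symm y)), ?_, fun a => ⟨?_, ?_⟩⟩
  · exact e.measurable.comp <| hT.comp <|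
      measurable_fst.prodMk (e.symm.measurable.comp measurable_snd)
  · have hTa : Measurable (T a) := hT.of_uncurry_left
    rw [Measure.map_map (by fun_prop) e.measurable]
    have hcomp : (fun y => e (T a (e.symm y))) ∘ e = e ∘ T a := by
      ext x
      simp
    rw [hcomp, ← Measure.map_map e.measurable hTa, (hκ a).1, Kernel.map_apply _ e.symm.measurable,
      e.map_map_symm]
  · rw [lintegral_map_equiv]
    simp only [e.symm_apply_apply]
    have hkl := InformationTheory.klDiv_map_le (κ a) (γ.map e) e.symm.measurable
    rw [e.map_symm_map, ← Kernel.map_apply _ e.symm.measurable] at hkl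
    exact (hκ a).2.trans (by gcongr)

lemma prod [MeasurableSpace.CountablyGenerated X] [StandardBorelSpace Y] [Nonempty Y]
    [IsProbabilityMeasure γ] {γ' : Measure Y} [IsProbabilityMeasure γ'] {c' : Y → Y → ℝ≥0∞}
    (hc : Measurable (Function.uncurry c)) (hc' : Measurable (Function.uncurry c'))
    (h : TransportEntropyInequality γ c K) (h' : TransportEntropyInequality γ' c' K) :
    TransportEntropyInequality (γ.prod γ') (fun p q => c p.1 q.1 + c' p.2 q.2) K := by
  intro A _ κ _
  obtain ⟨T, hT, hκ⟩ := h κ.fst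
  obtain ⟨S, hS, hκ'⟩ := h' κ.condKernel
  have hTa (a : A) : Measurable (T a) := hT.of_uncurry_left
  have hSa (a : A) : Measurable (Function.uncurry fun x => S (a, x)) :=
    hS.comp ((measurable_prodMk_left.comp measurable_fst).prodMk measurable_snd)
  have hdisint (a : A) : κ.fst a ⊗ₘ Kernel.sectR κ.condKernel a = κ a := by
    rw [← Kernel.compProd_apply_eq_compProd_sectR, κ.disintegrate]
  refine ⟨fun a => triangularMap (T a) fun x => S (a, x), ?_, fun a => ⟨?_, ?_⟩⟩
  · have hTa' : Measurable fun q : A × X × Y => T q.1 q.2.1 :=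
      hT.comp (measurable_fst.prodMk (measurable_fst.comp measurable_snd))
    exact hTa'.prodMk (hS.comp ((measurable_fst.prodMk hTa').prodMk
      (measurable_snd.comp measurable_snd)))
  · rw [map_prod_triangularMap (hTa a) (hSa a) (κ := Kernel.sectR κ.condKernel a)
      fun x => (hκ' (a, x)).1, (hκ a).1, hdisint]
  · calc ∫⁻ p, c p.1 (triangularMap (T a) (fun x => S (a, x)) p).1 +
          c' p.2 (triangularMap (T a) (fun x => S (a, x)) p).2 ∂γ.prod γ'
      _ = ∫⁻ x, c x (T a x) ∂γ + ∫⁻ x, ∫⁻ y, c' y (S (a, x) y) ∂γ' ∂κ.fst a := by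
          rw [lintegral_add_triangularMap (hTa a) (hSa a) γ γ' hc hc', (hκ a).1]
      _ ≤ K * InformationTheory.klDiv (κ.fst a) γ +
            ∫⁻ x, K * InformationTheory.klDiv (κ.condKernel (a, x)) γ' ∂κ.fst a :=
          add_le_add (hκ a).2 (lintegral_mono fun x => (hκ' (a, x)).2)
      _ = K * InformationTheory.klDiv (κ a) (γ.prod γ') := by
          rw [lintegral_const_mul' _ _ ENNReal.coe_ne_top, ← mul_add]
          conv_rhs => rw [← hdisint a, klDiv_compProd_prod_eq_add]
          rfl

lemma pi [StandardBorelSpace X] [Nonempty X] [IsProbabilityMeasure γ]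
    (hc : Measurable (Function.uncurry c)) (h : TransportEntropyInequality γ c K) (n : ℕ) :
    TransportEntropyInequality (Measure.pi fun _ : Fin n => γ)
      (fun x y => ∑ i, c (x i) (y i)) K := by
  induction n with
  | zero =>
    refine fun A _ κ _ => ⟨fun _ => id, measurable_snd, fun a => ⟨?_, by simp⟩⟩
    rw [Measure.map_id]
    exact isProbabilityMeasure_eq_of_subsingleton _ _
  | succ n ih =>
    let e := MeasurableEquiv.piFinSuccAbove (fun _ : Fin (n + 1) => X) 0
    have hmap : (γ.prod (Measure.pi fun _ : Fin n => γ)).map e.symm =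
        Measure.pi fun _ : Fin (n + 1) => γ :=
      (measurePreserving_piFinSuccAbove (fun _ : Fin (n + 1) => γ) 0).symm.map_eq
    have hcost : Measurable (Function.uncurry fun x y : Fin n → X => ∑ i, c (x i) (y i)) :=
      Finset.measurable_sum _ fun i _ => by fun_prop
    have hprod := (h.prod hc hcost ih).map_equiv e.symm
    rw [hmap] at hprod
    convert hprod using 3 with x y
    exact Fin.sum_univ_succ _

end TransportEntropyInequality

end Tensorization

section StdGaussian

variable (V : Type*) [NormedAddCommGroup V] [InnerProductSpace ℝ V] [FiniteDimensional ℝ V]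
  [MeasurableSpace V] [BorelSpace V]

lemma integrable_exp_neg_sq_norm_div_two : Integrable (fun x : V => Real.exp (-‖x‖ ^ 2 / 2)) := by
  refine Integrable.of_integral_ne_zero ?_
  have h := GaussianFourier.integral_rexp_neg_mul_sq_norm (V := V) (b := 1 / 2) (by norm_num)
  simp_rw [neg_div, div_eq_inv_mul, ← neg_mul, ← one_div]
  rw [h]
  positivity

lemma two_pi_rpow_neg_mul_cpow (n : ℕ) :
    (((2 * Real.pi) ^ (-(n : ℝ) / 2) : ℝ) : ℂ) * ((Real.pi : ℂ) / (1 / 2)) ^ ((n : ℂ) / 2) = 1 := by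
  have hbase : (Real.pi : ℂ) / (1 / 2) = ((2 * Real.pi : ℝ) : ℂ) := by
    push_cast
    ring
  have hexp : (n : ℂ) / 2 = ((n / 2 : ℝ) : ℂ) := by push_cast; rfl
  rw [hbase, hexp, ← Complex.ofReal_cpow (by positivity), ← Complex.ofReal_mul,
    ← Real.rpow_add (by positivity), neg_div, neg_add_cancel, Real.rpow_zero, Complex.ofReal_one]

theorem stdGaussian_eq_withDensity :
    ProbabilityTheory.stdGaussian V = volume.withDensity fun x => ENNReal.ofReal
      ((2 * Real.pi) ^ (-(Module.finrank ℝ V : ℝ) / 2) * Real.exp (-‖x‖ ^ 2 / 2)) := by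
  set n := Module.finrank ℝ V
  have : IsFiniteMeasure (volume.withDensity fun x : V => ENNReal.ofReal
      ((2 * Real.pi) ^ (-(n : ℝ) / 2) * Real.exp (-‖x‖ ^ 2 / 2))) :=
    isFiniteMeasure_withDensity_ofReal ((integrable_exp_neg_sq_norm_div_two V).const_mul _).2
  refine Measure.ext_of_charFun (funext fun t => ?_)
  have hintegrand (x : V) : (ENNReal.ofReal ((2 * Real.pi) ^ (-(n : ℝ) / 2) *
        Real.exp (-‖x‖ ^ 2 / 2))).toReal • Complex.exp (inner ℝ x t * Complex.I) =
      ((2 * Real.pi) ^ (-(n : ℝ) / 2) : ℝ) *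
        Complex.exp (-(1 / 2) * ‖x‖ ^ 2 + Complex.I * inner ℝ t x) := by
    rw [ENNReal.toReal_ofReal (by positivity), Complex.exp_add, real_inner_comm, Complex.real_smul]
    push_cast
    ring_nf
  rw [charFun_stdGaussian, charFun_apply,
    integral_withDensity_eq_integral_toReal_smul (by fun_prop) (by simp)]
  simp_rw [hintegrand]
  rw [integral_const_mul, GaussianFourier.integral_cexp_neg_mul_sq_norm_add (by norm_num),
    ← mul_assoc, two_pi_rpow_neg_mul_cpow, one_mul, Complex.I_sq]
  ring_nf

lemma stdGaussian_eq_map_pi (d : ℕ) :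
    stdGaussian d = (Measure.pi fun _ : Fin d => gaussianReal 0 1).map (WithLp.toLp 2) := by
  rw [map_pi_eq_stdGaussian, stdGaussian_eq_withDensity, finrank_euclideanSpace_fin]
  rfl

instance isProbabilityMeasure_stdGaussian (d : ℕ) : IsProbabilityMeasure (stdGaussian d) := by
  rw [stdGaussian_eq_map_pi, map_pi_eq_stdGaussian]
  infer_instance

theorem transportEntropyInequality_stdGaussian (d : ℕ) :
    TransportEntropyInequality (stdGaussian d) (fun x y => ENNReal.ofReal (‖y - x‖ ^ 2)) 2 := by
  have h := (transportEntropyInequality_gaussianReal.pi (by fun_prop) d).map_equiv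
    (MeasurableEquiv.toLp 2 (Fin d → ℝ))
  rw [MeasurableEquiv.coe_toLp, ← stdGaussian_eq_map_pi] at h
  convert h using 3 with x y
  rw [EuclideanSpace.real_norm_sq_eq, ENNReal.ofReal_sum_of_nonneg fun _ _ => sq_nonneg _]
  rfl

end StdGaussian

section Coupling

lemma klDiv_eq_informationTheory_klDiv (ν μ : Measure α) [IsProbabilityMeasure ν]
    [IsProbabilityMeasure μ] : klDiv ν μ = InformationTheory.klDiv ν μ := by
  rw [klDiv]
  split_ifs with h
  · simp [InformationTheory.klDiv_of_ac_of_integrable h.1 h.2]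
  · exact (not_ne_iff.1 (mt InformationTheory.klDiv_ne_top_iff.1 h)).symm

lemma isCoupling_map_graph {d : ℕ} (μ : Measure (EuclideanSpace ℝ (Fin d)))
    [IsProbabilityMeasure μ] {T : EuclideanSpace ℝ (Fin d) → EuclideanSpace ℝ (Fin d)}
    (hT : Measurable T) : IsCoupling (μ.map fun x => (x, T x)) μ (μ.map T) := by
  have hgraph : Measurable fun x => (x, T x) := measurable_id.prodMk hT
  refine ⟨Measure.isProbabilityMeasure_map hgraph.aemeasurable, ?_, ?_⟩
  · rw [Measure.map_map measurable_fst hgraph]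
    exact Measure.map_id
  · rw [Measure.map_map measurable_snd hgraph]
    rfl

end Coupling

end

/-- **Lemma 4.4**: there is a coupling `π` of the standard Gaussian `γ_d` and `ν` such
that the straight-line interpolation paths `x_t(x,y) = (1−t)x + t·y` have velocity
`y − x` for all `t`, and the time-integrated expected squared velocity—which equals
`∫ ‖y − x‖² dπ(x,y)`—is at most `2·D_KL(ν‖γ_d)`. -/
theorem exists_coupling_velocity_bound {d : ℕ}
    (ν : Measure (EuclideanSpace ℝ (Fin d))) [IsProbabilityMeasure ν]
    (hKL : klDiv ν (stdGaussian d) < ∞) :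
    ∃ π : Measure (EuclideanSpace ℝ (Fin d) × EuclideanSpace ℝ (Fin d)),
      IsCoupling π (stdGaussian d) ν ∧
      (∀ x y : EuclideanSpace ℝ (Fin d), ∀ t : ℝ,
        HasDerivAt (fun s : ℝ => (1 - s) • x + s • y) (y - x) t) ∧
      ∫⁻ p, ENNReal.ofReal (‖p.2 - p.1‖ ^ 2) ∂π ≤ 2 * klDiv ν (stdGaussian d) := by
  obtain ⟨T, hT, hmap, hcost⟩ := (transportEntropyInequality_stdGaussian d).exists_map ν
  refine ⟨(stdGaussian d).map fun x => (x, T x), hmap ▸ isCoupling_map_graph _ hT,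
    fun x y t => ?_, ?_⟩
  · simp_rw [← AffineMap.lineMap_apply_module]
    exact AffineMap.hasDerivAt_lineMap
  · rw [lintegral_map (by fun_prop) (by fun_prop), klDiv_eq_informationTheory_klDiv]
    exact hcost
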